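/- Let a > 1/15. The function F_a is strictly decreasing on (0, ∞) if and only if a ∈ (1/15, a₀'], where a₀' = (45 − 4π² + 3√(4π⁴ − 80π² + 405)) / (30(π² − 9)) ≈ 0.47053. -/

import Mathlib

open Real Filter Set

/-- The digamma function ψ(x) = Γ'(x)/Γ(x), as the derivative of log ∘ Γ. -/
noncomputable def digamma (x : ℝ) : ℝ := deriv (fun y : ℝ => Real.log (Real.Gamma y)) x

/-- L(x,a) = (1/(90a²+2))·ln(x²+x+(3a+1)/3) + (45a²/(90a²+2))·ln(x²+x+(15a−1)/(45a)). -/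
noncomputable def L (x a : ℝ) : ℝ :=
  (1 / (90 * a ^ 2 + 2)) * Real.log (x ^ 2 + x + (3 * a + 1) / 3) +
    (45 * a ^ 2 / (90 * a ^ 2 + 2)) * Real.log (x ^ 2 + x + (15 * a - 1) / (45 * a))

/-!
With `c = a - 1 / (45 * a)`, the derivative of `F_a` is `ψ'(x + 1) - h c x`, where `h c` is a
rational function that decreases strictly in `c`. If `F_a` decreases then `F_a' 0 ≤ 0`, that is,
`π ^ 2 / 6 ≤ h c 0`; this means `c ≤ c₀` for an explicit `c₀`, and solving a quadratic equation
turns it into the bound on `a`. Conversely, by monotonicity in `c` it is enough to prove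
`ψ'(x + 1) < h c₀ x` for `x > 0`. Equality holds at `x = 0`, so near `0` both sides are compared
with one quadratic polynomial taking the common value there. Away from `0` there is room to replace
`c₀` by a slightly larger `c`, for which `1 / (x + 1) ^ 2 ≤ h c x - h c (x + 1)`, and the series of
`ψ'` telescopes.
-/

/-- The trigamma function `ψ'`, as the series `∑ 1 / (x + n) ^ 2`; it is the derivative of `digamma`
on the positive reals (`hasDerivAt_digamma`). -/
noncomputable def trigamma (x : ℝ) : ℝ := ∑' n : ℕ, 1 / (x + n) ^ 2

lemma hasSum_trigamma (x : ℝ) : HasSum (fun n : ℕ ↦ 1 / (x + n) ^ 2) (trigamma x) := by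
  have hsum := (Real.summable_one_div_nat_add_rpow x 2).2 one_lt_two
  simp only [Real.rpow_two, sq_abs, add_comm _ x] at hsum
  exact hsum.hasSum

lemma trigamma_eq_add (x : ℝ) : trigamma x = 1 / x ^ 2 + trigamma (x + 1) := by
  rw [trigamma, (hasSum_trigamma x).summable.tsum_eq_zero_add, trigamma]
  push_cast
  simp only [add_zero, add_assoc, add_comm (1 : ℝ)]

lemma trigamma_one : trigamma 1 = π ^ 2 / 6 := by
  have hzeta := (hasSum_nat_add_iff' 1).2 hasSum_zeta_two
  simp only [Finset.range_one, Finset.sum_singleton, Nat.cast_zero, zero_pow two_ne_zero, div_zero,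
    sub_zero, Nat.cast_add, Nat.cast_one, add_comm _ (1 : ℝ)] at hzeta
  exact (hasSum_trigamma 1).unique hzeta

lemma differentiableAt_log_Gamma {x : ℝ} (hx : 0 < x) :
    DifferentiableAt ℝ (fun y ↦ log (Gamma y)) x :=
  ((differentiableOn_Gamma_Ioi x hx).differentiableAt (Ioi_mem_nhds hx)).log
    (Gamma_pos_of_pos hx).ne'

lemma log_Gamma_add_one {x : ℝ} (hx : 0 < x) :
    log (Gamma (x + 1)) = log x + log (Gamma x) := by
  rw [Gamma_add_one hx.ne', log_mul hx.ne' (Gamma_pos_of_pos hx).ne']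

lemma digamma_add_one {x : ℝ} (hx : 0 < x) : digamma (x + 1) = digamma x + 1 / x := by
  have hshift : (fun y ↦ log (Gamma (y + 1))) =ᶠ[nhds x] fun y ↦ log y + log (Gamma y) :=
    (lt_mem_nhds hx).mono fun _ ↦ log_Gamma_add_one
  rw [digamma, ← deriv_comp_add_const, hshift.deriv_eq,
    deriv_fun_add (differentiableAt_log hx.ne') (differentiableAt_log_Gamma hx), Real.deriv_log,
    digamma, one_div, add_comm]

lemma digamma_add_nat {x : ℝ} (hx : 0 < x) (n : ℕ) :
    digamma (x + n) = digamma x + ∑ i ∈ Finset.range n, 1 / (x + i) := by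
  induction n with
  | zero => simp
  | succ n ih =>
    rw [Finset.sum_range_succ, ← add_assoc, ← ih, Nat.cast_succ, ← add_assoc,
      digamma_add_one (by positivity)]

lemma slope_log_Gamma_add_one {x : ℝ} (hx : 0 < x) :
    slope (log ∘ Gamma) x (x + 1) = log x := by
  simp [slope_def_field, log_Gamma_add_one hx]

lemma digamma_le_log {x : ℝ} (hx : 0 < x) : digamma x ≤ log x := by
  rw [← slope_log_Gamma_add_one hx]
  exact convexOn_log_Gamma.deriv_le_slope hx (mem_Ioi.2 (by positivity)) (lt_add_one x)
    (differentiableAt_log_Gamma hx)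

lemma log_le_digamma_add_one {x : ℝ} (hx : 0 < x) : log x ≤ digamma (x + 1) := by
  rw [← slope_log_Gamma_add_one hx]
  exact convexOn_log_Gamma.slope_le_deriv hx (mem_Ioi.2 (by positivity)) (lt_add_one x)
    (differentiableAt_log_Gamma (by positivity))

lemma tendsto_digamma_add_sub_log (y : ℝ) :
    Tendsto (fun x ↦ digamma (x + y) - log x) atTop (nhds 0) := by
  refine tendsto_of_tendsto_of_tendsto_of_le_of_le' (tendsto_log_comp_add_sub_log (y - 1))
    (tendsto_log_comp_add_sub_log y) ?_ ?_
  · filter_upwards [eventually_gt_atTop (1 - y)] with x hx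
    simpa [add_assoc] using log_le_digamma_add_one (x := x + (y - 1)) (by linarith)
  · filter_upwards [eventually_gt_atTop (-y)] with x hx
    gcongr
    exact digamma_le_log (by linarith)

lemma hasSum_digamma_sub {x y : ℝ} (hy : 0 < y) (hyx : y ≤ x) :
    HasSum (fun n : ℕ ↦ 1 / (y + n) - 1 / (x + n)) (digamma x - digamma y) := by
  have hlim : Tendsto (fun t ↦ digamma (t + y) - digamma (t + x)) atTop (nhds 0) := by
    simpa using (tendsto_digamma_add_sub_log y).sub (tendsto_digamma_add_sub_log x)
  have hpartial (n : ℕ) : ∑ i ∈ Finset.range n, (1 / (y + i) - 1 / (x + i)) =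
      digamma x - digamma y + (digamma (n + y) - digamma (n + x)) := by
    rw [Finset.sum_sub_distrib, add_comm (n : ℝ), add_comm (n : ℝ), digamma_add_nat hy,
      digamma_add_nat (hy.trans_le hyx)]
    ring
  rw [hasSum_iff_tendsto_nat_of_nonneg fun n ↦ sub_nonneg.2 (by gcongr)]
  simpa only [hpartial, add_zero] using!
    (hlim.comp tendsto_natCast_atTop_atTop).const_add (digamma x - digamma y)

lemma hasDerivAt_digamma {x : ℝ} (hx : 0 < x) : HasDerivAt digamma (trigamma x) x := by
  obtain ⟨b, hb, hbx⟩ := exists_between hx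
  have hterm (n : ℕ) (y : ℝ) (hy : y ∈ Ioi b) :
      HasDerivAt (fun z ↦ 1 / (b + n) - 1 / (z + n)) (1 / (y + n) ^ 2) y := by
    have hne : y + n ≠ 0 := (add_pos_of_pos_of_nonneg (hb.trans hy) n.cast_nonneg).ne'
    simpa [neg_div] using (((hasDerivAt_id y).add_const (n : ℝ)).inv hne).const_sub (1 / (b + n))
  have hbound (n : ℕ) (y : ℝ) (hy : y ∈ Ioi b) : ‖1 / (y + n) ^ 2‖ ≤ 1 / (b + n) ^ 2 := by
    rw [norm_of_nonneg (by positivity)]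
    gcongr
    exact le_of_lt hy
  have hseries := hasDerivAt_tsum_of_isPreconnected (hasSum_trigamma b).summable isOpen_Ioi
    isPreconnected_Ioi hterm hbound hbx (hasSum_digamma_sub hb hbx.le).summable hbx
  refine (hseries.const_add (digamma b)).congr_of_eventuallyEq ?_
  filter_upwards [lt_mem_nhds hbx] with y hy
  rw [(hasSum_digamma_sub hb hy.le).tsum_eq, add_sub_cancel]

lemma trigamma_add_one_le_of_one_div_sq_le_sub {g : ℝ → ℝ} {x : ℝ} (hg : ∀ y ≥ x, 0 ≤ g y)
    (hstep : ∀ y ≥ x, 1 / (y + 1) ^ 2 ≤ g y - g (y + 1)) : trigamma (x + 1) ≤ g x := by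
  have hx_le (n : ℕ) : x ≤ x + n := le_add_of_nonneg_right n.cast_nonneg
  refine Real.tsum_le_of_sum_range_le (fun n ↦ by positivity) fun n ↦ ?_
  calc ∑ i ∈ Finset.range n, 1 / (x + 1 + i) ^ 2
      ≤ ∑ i ∈ Finset.range n, (g (x + i) - g (x + (i + 1 : ℕ))) := by
        refine Finset.sum_le_sum fun i _ ↦ ?_
        rw [Nat.cast_succ, ← add_assoc, add_right_comm]
        exact hstep _ (hx_le i)
    _ = g x - g (x + n) := by
        rw [Finset.sum_range_sub' fun i : ℕ ↦ g (x + i), Nat.cast_zero, add_zero]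
    _ ≤ g x := sub_le_self _ (hg _ (hx_le n))

lemma hasSum_trigamma_sub {x : ℝ} (hx : 0 < x) :
    HasSum (fun n : ℕ ↦ 1 / (2 * (x + n) ^ 2 * (x + n + 1) ^ 2))
      (trigamma x - (1 / x + 1 / (2 * x ^ 2))) := by
  let k : ℕ → ℝ := fun n ↦ 1 / (x + n) + 1 / (2 * (x + n) ^ 2)
  have hk_sub (n : ℕ) : k n - k (n + 1) =
      1 / (x + n) ^ 2 - 1 / (2 * (x + n) ^ 2 * (x + n + 1) ^ 2) := by
    have : 0 < x + n := by positivity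
    simp only [k, Nat.cast_succ, ← add_assoc]
    field_simp
    ring
  have hk_anti : Antitone k := fun m n hmn ↦ by
    simp only [k]
    gcongr
  have hk_lim : Tendsto k atTop (nhds 0) := by
    have hinv : Tendsto (fun n : ℕ ↦ (x + n)⁻¹) atTop (nhds 0) :=
      tendsto_inv_atTop_zero.comp
        (tendsto_atTop_add_const_left _ x tendsto_natCast_atTop_atTop)
    simpa [k] using hinv.add ((hinv.pow 2).mul_const 2⁻¹)
  have hk_sum : HasSum (fun n ↦ k n - k (n + 1)) (k 0) := by
    rw [hasSum_iff_tendsto_nat_of_nonneg fun n ↦ sub_nonneg.2 (hk_anti n.le_succ)]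
    simpa only [Finset.sum_range_sub', sub_zero] using hk_lim.const_sub (k 0)
  simpa only [hk_sub, sub_sub_cancel, k, Nat.cast_zero, add_zero] using
    (hasSum_trigamma x).sub hk_sum

lemma antitoneOn_trigamma_sub :
    AntitoneOn (fun x ↦ trigamma x - (1 / x + 1 / (2 * x ^ 2))) (Ioi 0) := by
  intro x (hx : 0 < x) y (hy : 0 < y) hxy
  refine hasSum_le (fun n ↦ ?_) (hasSum_trigamma_sub hy) (hasSum_trigamma_sub hx)
  gcongr

-- The right-hand side adds up the quadratic Taylor polynomials at `0` of `1 / (x + 1) ^ 2`,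
-- `1 / (x + 2)` and `1 / (2 * (x + 2) ^ 2)`, with the coefficient `103 / 32` of `x ^ 2` rounded up.
lemma trigamma_add_one_le_quadratic {x : ℝ} (hx : 0 ≤ x) :
    trigamma (x + 1) ≤ π ^ 2 / 6 - 19 / 8 * x + 13 / 4 * x ^ 2 := by
  have hanti := antitoneOn_trigamma_sub (mem_Ioi.2 two_pos) (mem_Ioi.2 (by positivity))
    (show (2 : ℝ) ≤ x + 1 + 1 by linarith)
  have hx_succ := trigamma_eq_add (x + 1)
  have htwo : trigamma 2 = π ^ 2 / 6 - 1 := by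
    rw [← trigamma_one, trigamma_eq_add 1]
    norm_num
  have htaylor₁ : 1 / (x + 1) ^ 2 ≤ 1 - 2 * x + 3 * x ^ 2 := by
    rw [div_le_iff₀ (by positivity), ← sub_nonneg]
    ring_nf
    positivity
  have htaylor₂ : 1 / (x + 1 + 1) ≤ 1 / 2 - x / 4 + x ^ 2 / 8 := by
    rw [div_le_iff₀ (by positivity), ← sub_nonneg]
    ring_nf
    positivity
  have htaylor₃ : 1 / (2 * (x + 1 + 1) ^ 2) ≤ 1 / 8 - x / 8 + 3 / 32 * x ^ 2 := by
    rw [div_le_iff₀ (by positivity), ← sub_nonneg]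
    ring_nf
    positivity
  have hxsq := sq_nonneg x
  simp only [htwo] at hanti
  linarith

/-- The rational function `h c x` of the proof idea. For `c = a - 1 / (45 * a)` it is the derivative
of `L · a` (`hasDerivAt_L`), so it is the approximation to the trigamma function at `x + 1` that
corresponds to the approximation `L x a` of the digamma function. -/
noncomputable def trigammaApprox (c x : ℝ) : ℝ :=
  (x + 1 / 2) * (x ^ 2 + x + 1 / 3 + c) /
    ((x ^ 2 + x + 1 / 3) ^ 2 + c * (x ^ 2 + x + 1 / 3) - 1 / 45)

lemma trigammaApprox_denom_pos {c x : ℝ} (hc : -4 / 15 < c) (hx : 0 ≤ x) :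
    0 < (x ^ 2 + x + 1 / 3) ^ 2 + c * (x ^ 2 + x + 1 / 3) - 1 / 45 := by
  have hc' : 0 < c + 4 / 15 := by linarith
  calc 0 < (x ^ 2 + x) * (x ^ 2 + x + 2 / 5) + (c + 4 / 15) * (x ^ 2 + x + 1 / 3) := by positivity
    _ = _ := by ring

lemma trigammaApprox_nonneg {c x : ℝ} (hc : -4 / 15 < c) (hx : 0 ≤ x) :
    0 ≤ trigammaApprox c x :=
  div_nonneg (mul_nonneg (by positivity) (by nlinarith)) (trigammaApprox_denom_pos hc hx).le

lemma strictAntiOn_trigammaApprox {x : ℝ} (hx : 0 ≤ x) :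
    StrictAntiOn (fun c ↦ trigammaApprox c x) (Ioi (-4 / 15)) := by
  intro c hc d hd hcd
  have hpos : 0 < (x + 1 / 2) * (d - c) := mul_pos (by positivity) (sub_pos.2 hcd)
  simp only [trigammaApprox]
  rw [div_lt_div_iff₀ (trigammaApprox_denom_pos hd hx) (trigammaApprox_denom_pos hc hx)]
  linarith

lemma trigammaApprox_zero {c : ℝ} (hc : -4 / 15 < c) :
    trigammaApprox c 0 = (15 + 45 * c) / (8 + 30 * c) := by
  rw [trigammaApprox, div_eq_div_iff (trigammaApprox_denom_pos hc le_rfl).ne' (by linarith)]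
  ring

lemma trigammaApprox_partial_fractions {a x : ℝ} (ha : 1 / 15 < a) (hx : 0 ≤ x) :
    trigammaApprox (a - 1 / (45 * a)) x =
      1 / (90 * a ^ 2 + 2) * ((2 * x + 1) / (x ^ 2 + x + (3 * a + 1) / 3)) +
        45 * a ^ 2 / (90 * a ^ 2 + 2) * ((2 * x + 1) / (x ^ 2 + x + (15 * a - 1) / (45 * a))) := by
  have : 0 < a := by linarith
  have : 0 < 15 * a - 1 := by linarith
  set u := x ^ 2 + x + 1 / 3 with hu
  have hp : x ^ 2 + x + (3 * a + 1) / 3 = u + a := by rw [hu]; ring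
  have hq : x ^ 2 + x + (15 * a - 1) / (45 * a) = u - 1 / (45 * a) := by rw [hu]; field_simp; ring
  have hp_pos : 0 < u + a := by rw [← hp]; positivity
  have hq_pos : 0 < u - 1 / (45 * a) := by rw [← hq]; positivity
  have hdenom : u ^ 2 + (a - 1 / (45 * a)) * u - 1 / 45 = (u + a) * (u - 1 / (45 * a)) := by
    field_simp
    ring
  rw [trigammaApprox, ← hu, hdenom, hp, hq, mul_div, mul_div,
    div_add_div _ _ hp_pos.ne' hq_pos.ne']
  congr 1
  field_simp
  ring

lemma neg_four_div_fifteen_lt_sub_one_div {a : ℝ} (ha : 1 / 15 < a) :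
    -4 / 15 < a - 1 / (45 * a) := by
  have hinv : 1 / (45 * a) < 1 / (45 * (1 / 15)) := by gcongr
  linarith

lemma hasDerivAt_L {a x : ℝ} (ha : 1 / 15 < a) (hx : 0 ≤ x) :
    HasDerivAt (fun y ↦ L y a) (trigammaApprox (a - 1 / (45 * a)) x) x := by
  have : 0 < a := by linarith
  have : 0 < 15 * a - 1 := by linarith
  have hquad (k : ℝ) : HasDerivAt (fun y : ℝ ↦ y ^ 2 + y + k) (2 * x + 1) x := by
    simpa using ((hasDerivAt_pow 2 x).add (hasDerivAt_id x)).add_const k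
  rw [trigammaApprox_partial_fractions ha hx]
  exact (((hquad _).log (by positivity)).const_mul _).add
    (((hquad _).log (by positivity)).const_mul _)

lemma hasDerivAt_digamma_sub_L {a x : ℝ} (ha : 1 / 15 < a) (hx : 0 ≤ x) :
    HasDerivAt (fun y ↦ digamma (y + 1) - L y a)
      (trigamma (x + 1) - trigammaApprox (a - 1 / (45 * a)) x) x :=
  ((hasDerivAt_digamma (by positivity)).comp_add_const x 1).sub (hasDerivAt_L ha hx)

lemma one_div_sq_le_trigammaApprox_sub {x : ℝ} (hx : 1 / 30 ≤ x) :
    1 / (x + 1) ^ 2 ≤ trigammaApprox (17 / 40) x - trigammaApprox (17 / 40) (x + 1) := by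
  obtain ⟨z, hz, rfl⟩ : ∃ z, 0 ≤ z ∧ x = 1 / 30 + z := ⟨x - 1 / 30, by linarith, by ring⟩
  have hd := trigammaApprox_denom_pos (c := 17 / 40) (x := 1 / 30 + z) (by norm_num) (by positivity)
  have hd' := trigammaApprox_denom_pos (c := 17 / 40) (x := 1 / 30 + z + 1) (by norm_num)
    (by positivity)
  rw [trigammaApprox, trigammaApprox, div_sub_div _ _ hd.ne' hd'.ne',
    div_le_div_iff₀ (by positivity) (by positivity), ← sub_nonneg]
  -- As a polynomial in `z`, the difference has positive coefficients only.
  ring_nf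
  positivity

lemma quadratic_lt_trigammaApprox {c x : ℝ} (hc : 21 / 50 ≤ c) (hx : 0 < x) (hx' : x ≤ 1 / 30) :
    trigammaApprox c 0 - 19 / 8 * x + 13 / 4 * x ^ 2 < trigammaApprox c x := by
  obtain ⟨e, he, rfl⟩ : ∃ e, 0 ≤ e ∧ c = 21 / 50 + e := ⟨c - 21 / 50, by linarith, by ring⟩
  have hpow (j k : ℕ) : e ^ j * x ^ (k + 1) ≤ e ^ j * (x * (1 / 30) ^ k) := by
    rw [pow_succ']
    gcongr
  have hd := trigammaApprox_denom_pos (c := 21 / 50 + e) (by linarith) hx.le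
  rw [trigammaApprox_zero (by linarith), sub_add, div_sub' (by positivity), trigammaApprox,
    div_lt_div_iff₀ (by positivity) hd]
  -- The difference is a polynomial in `x` and `e` divisible by `x`. The coefficients of `x`,
  -- `e * x` and `e ^ 2 * x` are positive and, for `x ≤ 1 / 30`, outweigh those of the higher
  -- powers of `x`.
  linarith [hpow 0 1, hpow 0 2, hpow 0 3, hpow 0 4, hpow 0 5, hpow 1 1, hpow 1 2, hpow 1 3,
    hpow 1 4, hpow 1 5, hpow 2 1, hpow 2 2, hpow 2 3, mul_nonneg he hx.le,
    mul_nonneg (sq_nonneg e) hx.le]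

/-- The number `c₀` of the proof idea: the value of `c` at which `trigammaApprox c 0` equals
`π ^ 2 / 6`, the trigamma function at `1`. -/
noncomputable def criticalParam : ℝ := (45 - 4 * π ^ 2) / (15 * (π ^ 2 - 9))

lemma pi_sq_mem_Ioo : π ^ 2 ∈ Ioo 9.869 9.87 :=
  ⟨by nlinarith [pi_gt_d4], by nlinarith [pi_pos, pi_lt_d4]⟩

lemma criticalParam_mem_Ioo : criticalParam ∈ Ioo (21 / 50) (17 / 40) := by
  obtain ⟨hl, hu⟩ := pi_sq_mem_Ioo
  have hpos : 0 < 15 * (π ^ 2 - 9) := by linarith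
  rw [criticalParam, mem_Ioo, lt_div_iff₀ hpos, div_lt_iff₀ hpos]
  constructor <;> linarith

lemma trigammaApprox_criticalParam_zero : trigammaApprox criticalParam 0 = π ^ 2 / 6 := by
  have hc := criticalParam_mem_Ioo.1
  have hpi : π ^ 2 - 9 ≠ 0 := by linarith [pi_sq_mem_Ioo.1]
  rw [trigammaApprox_zero (by linarith), div_eq_div_iff (by linarith) (by norm_num), criticalParam]
  field_simp
  ring

lemma pi_sq_div_six_le_trigammaApprox_zero_iff {c : ℝ} (hc : -4 / 15 < c) :
    π ^ 2 / 6 ≤ trigammaApprox c 0 ↔ c ≤ criticalParam := by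
  rw [← trigammaApprox_criticalParam_zero]
  exact (strictAntiOn_trigammaApprox le_rfl).le_iff_ge
    (mem_Ioi.2 (by linarith [criticalParam_mem_Ioo.1])) hc

lemma trigamma_add_one_lt_trigammaApprox {c x : ℝ} (hc : -4 / 15 < c) (hc' : c ≤ criticalParam)
    (hx : 0 < x) : trigamma (x + 1) < trigammaApprox c x := by
  obtain ⟨hl, hu⟩ := criticalParam_mem_Ioo
  have hanti := strictAntiOn_trigammaApprox hx.le
  have hcrit : criticalParam ∈ Ioi (-4 / 15) := mem_Ioi.2 (by linarith)
  refine lt_of_lt_of_le ?_ (hanti.antitoneOn hc hcrit hc')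
  rcases le_total x (1 / 30) with hsmall | hlarge
  · calc trigamma (x + 1)
        ≤ π ^ 2 / 6 - 19 / 8 * x + 13 / 4 * x ^ 2 := trigamma_add_one_le_quadratic hx.le
      _ = trigammaApprox criticalParam 0 - 19 / 8 * x + 13 / 4 * x ^ 2 := by
          rw [trigammaApprox_criticalParam_zero]
      _ < trigammaApprox criticalParam x := quadratic_lt_trigammaApprox hl.le hx hsmall
  · calc trigamma (x + 1)
        ≤ trigammaApprox (17 / 40) x := trigamma_add_one_le_of_one_div_sq_le_sub
          (fun _ hy ↦ trigammaApprox_nonneg (by norm_num) (hx.le.trans hy))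
          (fun _ hy ↦ one_div_sq_le_trigammaApprox_sub (hlarge.trans hy))
      _ < trigammaApprox criticalParam x := hanti hcrit (mem_Ioi.2 (by norm_num)) hu

lemma sub_div_le_iff_le_add_sqrt {a c k : ℝ} (ha : 0 < a) (hk : 0 ≤ k) :
    a - k / a ≤ c ↔ a ≤ (c + √(c ^ 2 + 4 * k)) / 2 := by
  have hc : c ≤ √(c ^ 2 + 4 * k) := le_sqrt_of_sq_le (by linarith)
  have hquad : a - k / a - c = ((2 * a - c) ^ 2 - (c ^ 2 + 4 * k)) / (4 * a) := by
    field_simp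
    ring
  calc a - k / a ≤ c ↔ (2 * a - c) ^ 2 ≤ c ^ 2 + 4 * k := by
        rw [← sub_nonpos, hquad, div_le_iff₀ (by positivity), zero_mul, sub_nonpos]
    _ ↔ |2 * a - c| ≤ √(c ^ 2 + 4 * k) := by
        rw [← Real.sqrt_sq_eq_abs, Real.sqrt_le_sqrt_iff (by positivity)]
    _ ↔ a ≤ (c + √(c ^ 2 + 4 * k)) / 2 := by
        rw [abs_le]
        constructor
        · rintro ⟨-, h⟩
          linarith
        · intro h
          constructor <;> linarith

lemma half_add_sqrt_criticalParam :
    (criticalParam + √(criticalParam ^ 2 + 4 * (1 / 45))) / 2 =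
      (45 - 4 * π ^ 2 + 3 * √(4 * π ^ 4 - 80 * π ^ 2 + 405)) / (30 * (π ^ 2 - 9)) := by
  have hpos : 0 < π ^ 2 - 9 := by linarith [pi_sq_mem_Ioo.1]
  have hdisc : criticalParam ^ 2 + 4 * (1 / 45) =
      (3 / (15 * (π ^ 2 - 9))) ^ 2 * (4 * π ^ 4 - 80 * π ^ 2 + 405) := by
    rw [criticalParam]
    field_simp
    ring
  rw [hdisc, sqrt_mul (sq_nonneg _), sqrt_sq (by positivity), criticalParam]
  field_simp
  ring

/-- For a > 1/15, F_a(x) = ψ(x+1) − L(x,a) is strictly decreasing on (0,∞) iff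
a ∈ (1/15, a₀'], where a₀' = (45 − 4π² + 3√(4π⁴ − 80π² + 405))/(30(π² − 9)). -/
theorem stmt_8 (a : ℝ) (ha : 1 / 15 < a) :
    StrictAntiOn (fun x : ℝ => digamma (x + 1) - L x a) (Set.Ioi 0) ↔
      a ∈ Set.Ioc (1 / 15 : ℝ)
        ((45 - 4 * π ^ 2 + 3 * Real.sqrt (4 * π ^ 4 - 80 * π ^ 2 + 405)) /
          (30 * (π ^ 2 - 9))) := by
  have hc := neg_four_div_fifteen_lt_sub_one_div ha
  rw [mem_Ioc, and_iff_right ha, ← half_add_sqrt_criticalParam,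
    ← sub_div_le_iff_le_add_sqrt (by linarith) (by norm_num), div_div]
  constructor
  · intro hanti
    have hderiv := (hasDerivAt_digamma_sub_L ha le_rfl).hasDerivWithinAt.nonpos_of_antitoneOn
      (accPt_principal_iff_nhdsWithin.2 (by simpa using nhdsGT_neBot 0)) hanti.antitoneOn
    rwa [zero_add, trigamma_one, sub_nonpos, pi_sq_div_six_le_trigammaApprox_zero_iff hc] at hderiv
  · intro hcrit
    refine strictAntiOn_of_hasDerivWithinAt_neg (convex_Ioi 0)
      (fun x hx ↦ (hasDerivAt_digamma_sub_L ha (le_of_lt hx)).continuousAt.continuousWithinAt)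
      (fun x hx ↦ (hasDerivAt_digamma_sub_L ha (interior_subset hx).le).hasDerivWithinAt) ?_
    exact fun x hx ↦ sub_neg.2 (trigamma_add_one_lt_trigammaApprox hc hcrit (interior_subset hx))
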